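/- If f : ℝⁿ → ℝ is L-Lipschitz (with respect to the Euclidean norm), then its spherically symmetric increasing rearrangement f_* is also L-Lipschitz. -/

import Mathlib

open Set MeasureTheory

/-- Spherically symmetric rearrangement of a set: the centered open ball with the same
Lebesgue measure (all of space if the measure is infinite). -/
noncomputable def ballRe {n : ℕ} (A : Set (EuclideanSpace ℝ (Fin n))) :
    Set (EuclideanSpace ℝ (Fin n)) :=
  if volume A = ⊤ then Set.univ
  else Metric.ball 0
    (((volume A).toReal / (volume (Metric.ball (0 : EuclideanSpace ℝ (Fin n)) 1)).toReal)
      ^ ((1 : ℝ) / n))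

/-- Decreasing rearrangement `g*(y) = ∫₀^∞ 1_{{g > t}*}(y) dt`. -/
noncomputable def decRe {n : ℕ} (g : EuclideanSpace ℝ (Fin n) → ℝ)
    (y : EuclideanSpace ℝ (Fin n)) : ℝ :=
  ∫ t in Set.Ioi (0 : ℝ), (ballRe {z | t < g z}).indicator (fun _ => (1 : ℝ)) y

/-- Spherically symmetric increasing rearrangement `f_* = -log((e^{-f})*)`. -/
noncomputable def incRe {n : ℕ} (f : EuclideanSpace ℝ (Fin n) → ℝ)
    (y : EuclideanSpace ℝ (Fin n)) : ℝ :=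
  - Real.log (decRe (fun z => Real.exp (-f z)) y)

/-!
An inequality `|f u - f v| ≤ d` for all `‖u - v‖ ≤ r` gives an inclusion of sublevel sets,
`{f < c} + r B ⊆ {f < c + d}` with `B` the closed unit ball, and such inclusions survive
rearrangement because `A* + r B ⊆ (A + r B)*`. This is the Brunn–Minkowski inequality for `A` and a
ball, together with its equality case `|A*|^(1/n) + |r B|^(1/n) = |A* + r B|^(1/n)`. Read off on
`g = e^(-f)`, the inclusion says that a level `t` of the rearrangement at `x` yields the level
`e^(-d) t` at every `y` with `‖x - y‖ ≤ r`; hence the values of `g*` at `x` and `y` differ at most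
by a factor `e^d`, and `f_* = -log g*` varies by at most `d`.

Brunn–Minkowski is obtained from its functional form, the Prékopa–Leindler inequality: this is
stable under products, which reduces it to the real line, where `|A| + |B| ≤ |A + B|` is elementary.
-/

open Filter Metric Module
open scoped ENNReal Pointwise Topology

section ConvexWeights

variable {a b : ℝ}

lemma mul_rpow_mul_mul_rpow (ha : 0 ≤ a) (hb : 0 ≤ b) (hab : a + b = 1) (c x y : ℝ≥0∞) :
    (c * x) ^ a * (c * y) ^ b = c * (x ^ a * y ^ b) := by
  rw [ENNReal.mul_rpow_of_nonneg _ _ ha, ENNReal.mul_rpow_of_nonneg _ _ hb, mul_mul_mul_comm,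
    ← ENNReal.rpow_add_of_nonneg _ _ ha hb, hab, ENNReal.rpow_one]

lemma min_le_rpow_mul_rpow (ha : 0 ≤ a) (hb : 0 ≤ b) (hab : a + b = 1) (x y : ℝ≥0∞) :
    min x y ≤ x ^ a * y ^ b :=
  calc min x y = min x y ^ a * min x y ^ b := by
        rw [← ENNReal.rpow_add_of_nonneg _ _ ha hb, hab, ENNReal.rpow_one]
    _ ≤ x ^ a * y ^ b := by
        gcongr
        exacts [min_le_left x y, min_le_right x y]

lemma rpow_mul_rpow_le_add (ha : 0 < a) (hb : 0 < b) (hab : a + b = 1) (x y : ℝ≥0∞) :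
    x ^ a * y ^ b ≤ ENNReal.ofReal a * x + ENNReal.ofReal b * y := by
  have hconj : (a⁻¹).HolderConjugate b⁻¹ := ⟨by simp [hab], inv_pos.2 ha, inv_pos.2 hb⟩
  simpa [← ENNReal.rpow_mul, ha.ne', hb.ne', ENNReal.ofReal_inv_of_pos, ha, hb, div_eq_mul_inv,
    mul_comm] using ENNReal.young_inequality (x ^ a) (y ^ b) hconj

end ConvexWeights

section RealLine

lemma volume_add_volume_le_volume_add_of_isCompact {K L : Set ℝ} (hK : IsCompact K)
    (hL : IsCompact L) (hKne : K.Nonempty) (hLne : L.Nonempty) :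
    volume K + volume L ≤ volume (K + L) := by
  obtain ⟨m, hm, hm_max⟩ := hK.exists_isGreatest hKne
  obtain ⟨l, hl, hl_min⟩ := hL.exists_isLeast hLne
  -- These translates lie on the two sides of `m + l`, so they overlap in at most one point.
  have hdisj : AEDisjoint volume (l +ᵥ K) (m +ᵥ L) := by
    refine measure_mono_null (t := {m + l}) ?_ (by simp)
    rintro _ ⟨⟨x, hx, rfl⟩, ⟨y, hy, hxy⟩⟩
    have hxm := hm_max hx
    have hly := hl_min hy
    simp only [vadd_eq_add, mem_singleton_iff] at hxy ⊢
    linarith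
  calc volume K + volume L = volume (l +ᵥ K) + volume (m +ᵥ L) := by simp
    _ = volume ((l +ᵥ K) ∪ (m +ᵥ L)) :=
        (measure_union₀ (hL.vadd m).measurableSet.nullMeasurableSet hdisj).symm
    _ ≤ volume (K + L) :=
        measure_mono <| union_subset (add_comm K L ▸ vadd_set_subset_add hl)
          (vadd_set_subset_add hm)

lemma volume_add_volume_le_volume_add {A B : Set ℝ} (hA : MeasurableSet A) (hB : MeasurableSet B)
    (hAne : A.Nonempty) (hBne : B.Nonempty) : volume A + volume B ≤ volume (A + B) := by
  obtain ⟨p, hp⟩ := hAne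
  obtain ⟨q, hq⟩ := hBne
  rw [hA.measure_eq_iSup_isCompact, hB.measure_eq_iSup_isCompact]
  simp only [iSup_and']
  refine ENNReal.biSup_add_biSup_le' ⟨∅, by simp⟩ ⟨∅, by simp⟩ ?_
  rintro K ⟨hKA, hK⟩ L ⟨hLB, hL⟩
  calc volume K + volume L ≤ volume (insert p K) + volume (insert q L) := by
        gcongr <;> exact subset_insert _ _
    _ ≤ volume (insert p K + insert q L) :=
        volume_add_volume_le_volume_add_of_isCompact (hK.insert p) (hL.insert q)
          (insert_nonempty _ _) (insert_nonempty _ _)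
    _ ≤ volume (A + B) :=
        measure_mono (add_subset_add (insert_subset hp hKA) (insert_subset hq hLB))

lemma mul_volume_add_mul_volume_le {a b : ℝ} (ha : 0 ≤ a) (hb : 0 ≤ b) {A B : Set ℝ}
    (hA : MeasurableSet A) (hB : MeasurableSet B) (hAne : A.Nonempty) (hBne : B.Nonempty) :
    ENNReal.ofReal a * volume A + ENNReal.ofReal b * volume B ≤ volume (a • A + b • B) := by
  simpa [abs_of_nonneg, ha, hb] using volume_add_volume_le_volume_add
    (hA.const_smul₀ a) (hB.const_smul₀ b) hAne.smul_set hBne.smul_set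

end RealLine

section PrekopaLeindler

lemma lintegral_eq_lintegral_measure_ofReal_lt {α : Type*} [MeasurableSpace α] {μ : Measure α}
    {F : α → ℝ≥0∞} (hF : Measurable F) (hF_top : ∀ x, F x ≠ ⊤) :
    ∫⁻ x, F x ∂μ = ∫⁻ t in Ioi (0 : ℝ), μ {x | ENNReal.ofReal t < F x} := by
  have hlayer := lintegral_eq_lintegral_meas_lt μ (f := fun x => (F x).toReal)
    (Eventually.of_forall fun _ => ENNReal.toReal_nonneg) hF.ennreal_toReal.aemeasurable
  simp only [ENNReal.ofReal_toReal (hF_top _)] at hlayer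
  rw [hlayer]
  refine setLIntegral_congr_fun measurableSet_Ioi fun t ht => ?_
  simp only [ENNReal.ofReal_lt_iff_lt_toReal (le_of_lt (mem_Ioi.1 ht)) (hF_top _)]

lemma measurable_measure_ofReal_lt {α : Type*} [MeasurableSpace α] (μ : Measure α)
    (F : α → ℝ≥0∞) : Measurable fun t : ℝ => μ {x | ENNReal.ofReal t < F x} :=
  Antitone.measurable fun _ _ hst =>
    measure_mono fun _ hx => (ENNReal.ofReal_le_ofReal hst).trans_lt hx

lemma mul_lintegral_add_mul_lintegral_le {a b : ℝ} (ha : 0 ≤ a) (hb : 0 ≤ b) {F G H : ℝ → ℝ≥0∞}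
    (hF : Measurable F) (hG : Measurable G) (hH : Measurable H) (hF_sup : ⨆ x, F x = 1)
    (hG_sup : ⨆ x, G x = 1) (hFGH : ∀ x y, min (F x) (G y) ≤ H (a • x + b • y)) :
    ENNReal.ofReal a * (∫⁻ x, F x) + ENNReal.ofReal b * (∫⁻ x, G x) ≤ ∫⁻ x, H x := by
  have hF_le x : F x ≤ 1 := hF_sup ▸ le_iSup F x
  have hG_le x : G x ≤ 1 := hG_sup ▸ le_iSup G x
  have hlevel (t : ℝ) : ENNReal.ofReal a * volume {x | ENNReal.ofReal t < F x}
      + ENNReal.ofReal b * volume {x | ENNReal.ofReal t < G x}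
      ≤ volume {x | ENNReal.ofReal t < min (H x) 1} := by
    rcases lt_or_ge (ENNReal.ofReal t) 1 with ht | ht
    · refine (mul_volume_add_mul_volume_le ha hb (measurableSet_lt measurable_const hF)
        (measurableSet_lt measurable_const hG) (lt_iSup_iff.1 (ht.trans_eq hF_sup.symm))
        (lt_iSup_iff.1 (ht.trans_eq hG_sup.symm))).trans (measure_mono ?_)
      rintro _ ⟨_, ⟨x, hx, rfl⟩, _, ⟨y, hy, rfl⟩, rfl⟩
      exact lt_min ((lt_min hx hy).trans_le (hFGH x y)) ht
    · simp [((hF_le _).trans ht).not_gt, ((hG_le _).trans ht).not_gt]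
  calc ENNReal.ofReal a * (∫⁻ x, F x) + ENNReal.ofReal b * (∫⁻ x, G x)
      = ∫⁻ t in Ioi (0 : ℝ), (ENNReal.ofReal a * volume {x | ENNReal.ofReal t < F x}
          + ENNReal.ofReal b * volume {x | ENNReal.ofReal t < G x}) := by
        rw [lintegral_eq_lintegral_measure_ofReal_lt hF
            fun x => ne_top_of_le_ne_top ENNReal.one_ne_top (hF_le x),
          lintegral_eq_lintegral_measure_ofReal_lt hG
            fun x => ne_top_of_le_ne_top ENNReal.one_ne_top (hG_le x),
          lintegral_add_left ((measurable_measure_ofReal_lt _ F).const_mul _),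
          lintegral_const_mul' _ _ ENNReal.ofReal_ne_top,
          lintegral_const_mul' _ _ ENNReal.ofReal_ne_top]
    _ ≤ ∫⁻ t in Ioi (0 : ℝ), volume {x | ENNReal.ofReal t < min (H x) 1} := lintegral_mono hlevel
    _ = ∫⁻ x, min (H x) 1 :=
        (lintegral_eq_lintegral_measure_ofReal_lt (hH.min measurable_const) (by simp)).symm
    _ ≤ ∫⁻ x, H x := lintegral_mono fun x => min_le_left _ _

/-- The Prékopa–Leindler property of a measure: a function `H` that dominates the weighted geometric
means of `F` and `G` at the corresponding convex combinations of points has an integral that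
dominates the weighted geometric mean of theirs. It is the functional form of the Brunn–Minkowski
inequality and, unlike the latter, is inherited by products. -/
def IsPrekopaLeindler {E : Type*} [AddCommGroup E] [Module ℝ E] [MeasurableSpace E]
    (μ : Measure E) : Prop :=
  ∀ ⦃a b : ℝ⦄, 0 < a → 0 < b → a + b = 1 → ∀ ⦃F G H : E → ℝ≥0∞⦄,
    Measurable F → Measurable G → Measurable H →
    (∀ x y, F x ^ a * G y ^ b ≤ H (a • x + b • y)) →
    (∫⁻ x, F x ∂μ) ^ a * (∫⁻ x, G x ∂μ) ^ b ≤ ∫⁻ x, H x ∂μ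

lemma lintegral_rpow_mul_le_of_iSup_ne_top {a b : ℝ} (ha : 0 < a) (hb : 0 < b) (hab : a + b = 1)
    {F G H : ℝ → ℝ≥0∞} (hF : Measurable F) (hG : Measurable G) (hH : Measurable H)
    (hF_sup : ⨆ x, F x ≠ ⊤) (hG_sup : ⨆ x, G x ≠ ⊤)
    (hFGH : ∀ x y, F x ^ a * G y ^ b ≤ H (a • x + b • y)) :
    (∫⁻ x, F x) ^ a * (∫⁻ x, G x) ^ b ≤ ∫⁻ x, H x := by
  set M := ⨆ x, F x with hM
  set N := ⨆ x, G x with hN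
  rcases eq_or_ne M 0 with hM0 | hM0
  · simp [ENNReal.iSup_eq_zero.1 hM0, ha]
  rcases eq_or_ne N 0 with hN0 | hN0
  · simp [ENNReal.iSup_eq_zero.1 hN0, hb]
  set c := (M⁻¹) ^ a * (N⁻¹) ^ b with hc
  have hc0 : c ≠ 0 := by simp [hc, hF_sup, hG_sup, hM0, hN0, ha, hb]
  have hc_top : c ≠ ⊤ := ENNReal.mul_ne_top (by simp [hM0, ha.le]) (by simp [hN0, hb.le])
  have hscale (x y : ℝ≥0∞) : (M⁻¹ * x) ^ a * (N⁻¹ * y) ^ b = c * (x ^ a * y ^ b) := by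
    rw [ENNReal.mul_rpow_of_nonneg _ _ ha.le, ENNReal.mul_rpow_of_nonneg _ _ hb.le,
      mul_mul_mul_comm]
  have hnormalized := mul_lintegral_add_mul_lintegral_le ha.le hb.le (hF.const_mul M⁻¹)
    (hG.const_mul N⁻¹) (hH.const_mul c)
    (by rw [← ENNReal.mul_iSup, ← hM, ENNReal.inv_mul_cancel hM0 hF_sup])
    (by rw [← ENNReal.mul_iSup, ← hN, ENNReal.inv_mul_cancel hN0 hG_sup])
    fun x y => calc
      min (M⁻¹ * F x) (N⁻¹ * G y) ≤ (M⁻¹ * F x) ^ a * (N⁻¹ * G y) ^ b :=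
        min_le_rpow_mul_rpow ha.le hb.le hab _ _
      _ = c * (F x ^ a * G y ^ b) := hscale _ _
      _ ≤ c * H (a • x + b • y) := by gcongr; exact hFGH x y
  rw [lintegral_const_mul _ hF, lintegral_const_mul _ hG, lintegral_const_mul _ hH] at hnormalized
  rw [← ENNReal.mul_le_mul_iff_right hc0 hc_top, ← hscale]
  exact (rpow_mul_rpow_le_add ha hb hab _ _).trans hnormalized

lemma tendsto_lintegral_min_natCast {α : Type*} [MeasurableSpace α] {μ : Measure α}
    {F : α → ℝ≥0∞} (hF : Measurable F) :
    Tendsto (fun k : ℕ => ∫⁻ x, min (F x) k ∂μ) atTop (𝓝 (∫⁻ x, F x ∂μ)) := by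
  refine lintegral_tendsto_of_tendsto_of_monotone
    (fun k => (hF.min measurable_const).aemeasurable)
    (Eventually.of_forall fun x i j hij => min_le_min le_rfl (Nat.cast_le.2 hij))
    (Eventually.of_forall fun x => ?_)
  simpa using (tendsto_const_nhds (x := F x)).min ENNReal.tendsto_nat_nhds_top

theorem isPrekopaLeindler_volume_real : IsPrekopaLeindler (volume : Measure ℝ) := by
  intro a b ha hb hab F G H hF hG hH hFGH
  rcases eq_or_ne (∫⁻ x, F x) 0 with hF0 | hF0
  · simp [hF0, ha]
  rcases eq_or_ne (∫⁻ x, G x) 0 with hG0 | hG0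
  · simp [hG0, hb]
  have hlim : Tendsto (fun k : ℕ => (∫⁻ x, min (F x) k) ^ a * (∫⁻ x, min (G x) k) ^ b) atTop
      (𝓝 ((∫⁻ x, F x) ^ a * (∫⁻ x, G x) ^ b)) :=
    ENNReal.Tendsto.mul ((tendsto_lintegral_min_natCast hF).ennrpow_const a)
      (Or.inl (by simp [hF0, ha, ha.not_gt]))
      ((tendsto_lintegral_min_natCast hG).ennrpow_const b)
      (Or.inl (by simp [hG0, hb, hb.not_gt]))
  refine le_of_tendsto' hlim fun k => ?_
  have hbdd (F : ℝ → ℝ≥0∞) : ⨆ x, min (F x) k ≠ ⊤ :=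
    ne_top_of_le_ne_top (ENNReal.natCast_ne_top k) (iSup_le fun x => min_le_right _ _)
  refine lintegral_rpow_mul_le_of_iSup_ne_top ha hb hab (hF.min measurable_const)
    (hG.min measurable_const) hH (hbdd F) (hbdd G) fun x y => le_trans ?_ (hFGH x y)
  gcongr <;> exact min_le_left _ _

variable {E F : Type*} [AddCommGroup E] [Module ℝ E] [MeasurableSpace E]
  [AddCommGroup F] [Module ℝ F] [MeasurableSpace F]

lemma isPrekopaLeindler_of_subsingleton [Subsingleton E] (μ : Measure E) :
    IsPrekopaLeindler μ := by
  intro a b ha hb hab F G H _ _ _ hFGH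
  have hint (F : E → ℝ≥0∞) : ∫⁻ x, F x ∂μ = μ univ * F 0 := by
    simp [Subsingleton.elim _ (0 : E), mul_comm]
  rw [hint, hint, hint, mul_rpow_mul_mul_rpow ha.le hb.le hab]
  gcongr
  simpa using hFGH 0 0

namespace IsPrekopaLeindler

lemma const_smul {μ : Measure E} (hμ : IsPrekopaLeindler μ) (c : ℝ≥0∞) :
    IsPrekopaLeindler (c • μ) := by
  intro a b ha hb hab F G H hF hG hH hFGH
  simp only [lintegral_smul_measure, smul_eq_mul, mul_rpow_mul_mul_rpow ha.le hb.le hab]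
  gcongr
  exact hμ ha hb hab hF hG hH hFGH

lemma map {μ : Measure E} (hμ : IsPrekopaLeindler μ) (e : E →ₗ[ℝ] F) (he : Measurable e) :
    IsPrekopaLeindler (μ.map e) := by
  intro a b ha hb hab F G H hF hG hH hFGH
  rw [lintegral_map hF he, lintegral_map hG he, lintegral_map hH he]
  refine hμ ha hb hab (hF.comp he) (hG.comp he) (hH.comp he) fun x y => ?_
  simpa using hFGH (e x) (e y)

lemma prod {μ : Measure E} {ν : Measure F} [SFinite ν] (hμ : IsPrekopaLeindler μ)
    (hν : IsPrekopaLeindler ν) : IsPrekopaLeindler (μ.prod ν) := by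
  intro a b ha hb hab F G H hF hG hH hFGH
  rw [lintegral_prod _ hF.aemeasurable, lintegral_prod _ hG.aemeasurable,
    lintegral_prod _ hH.aemeasurable]
  refine hμ ha hb hab hF.lintegral_prod_right' hG.lintegral_prod_right' hH.lintegral_prod_right'
    fun x y => ?_
  exact hν ha hb hab (hF.comp measurable_prodMk_left) (hG.comp measurable_prodMk_left)
    (hH.comp measurable_prodMk_left) fun v w => hFGH (x, v) (y, w)

end IsPrekopaLeindler

end PrekopaLeindler

lemma measure_le_measure_add_of_nonempty {G : Type*} [AddGroup G] [MeasurableSpace G]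
    [MeasurableAdd G] (μ : Measure G) [μ.IsAddLeftInvariant] {A : Set G} (hA : A.Nonempty)
    (B : Set G) : μ B ≤ μ (A + B) := by
  obtain ⟨x, hx⟩ := hA
  calc μ B = μ (x +ᵥ B) := (measure_vadd μ x B).symm
    _ ≤ μ (A + B) := measure_mono (vadd_set_subset_add hx)

section AddHaar

variable {E F : Type*} [NormedAddCommGroup E] [NormedSpace ℝ E] [FiniteDimensional ℝ E]
  [MeasurableSpace E] [BorelSpace E] [NormedAddCommGroup F] [NormedSpace ℝ F]
  [FiniteDimensional ℝ F] [MeasurableSpace F] [BorelSpace F]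

lemma IsPrekopaLeindler.of_finrank_eq {μ : Measure E} [μ.IsAddHaarMeasure]
    (hμ : IsPrekopaLeindler μ) (hEF : finrank ℝ E = finrank ℝ F) (ν : Measure F)
    [ν.IsAddHaarMeasure] : IsPrekopaLeindler ν := by
  let e : E ≃L[ℝ] F := ContinuousLinearEquiv.ofFinrankEq hEF
  rw [ν.isAddLeftInvariant_eq_smul (μ.map e)]
  exact (hμ.map e.toLinearEquiv.toLinearMap e.continuous.measurable).const_smul _

theorem isPrekopaLeindler_of_isAddHaarMeasure (μ : Measure E) [μ.IsAddHaarMeasure] :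
    IsPrekopaLeindler μ := by
  have hpi (n : ℕ) : IsPrekopaLeindler (volume : Measure (Fin n → ℝ)) := by
    induction n with
    | zero => exact isPrekopaLeindler_of_subsingleton _
    | succ n ih =>
      exact (isPrekopaLeindler_volume_real.prod ih).of_finrank_eq (by simp [add_comm]) _
  exact (hpi (finrank ℝ E)).of_finrank_eq (by simp) μ

variable (μ : Measure E) [μ.IsAddHaarMeasure]

lemma measure_rpow_mul_measure_rpow_le {a b : ℝ} (ha : 0 < a) (hb : 0 < b) (hab : a + b = 1)
    {A B : Set E} (hA : MeasurableSet A) (hB : MeasurableSet B) :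
    μ A ^ a * μ B ^ b ≤ μ (a • A + b • B) := by
  set C := toMeasurable μ (a • A + b • B)
  have hC : MeasurableSet C := measurableSet_toMeasurable _ _
  have hind : ∀ x y, A.indicator 1 x ^ a * B.indicator 1 y ^ b
      ≤ C.indicator (1 : E → ℝ≥0∞) (a • x + b • y) := by
    intro x y
    by_cases hx : x ∈ A
    · by_cases hy : y ∈ B
      · have hxy : a • x + b • y ∈ C := subset_toMeasurable _ _
          (add_mem_add (smul_mem_smul_set hx) (smul_mem_smul_set hy))
        simp [hx, hy, hxy]
      · simp [hy, hb]
    · simp [hx, ha]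
  simpa [lintegral_indicator_one, hA, hB, hC, C] using isPrekopaLeindler_of_isAddHaarMeasure μ
    ha hb hab (measurable_one.indicator hA) (measurable_one.indicator hB)
    (measurable_one.indicator hC) hind

variable [Nontrivial E]

lemma measure_smul_rpow_inv_finrank {r : ℝ} (hr : 0 ≤ r) (A : Set E) :
    μ (r • A) ^ (finrank ℝ E : ℝ)⁻¹ = ENNReal.ofReal r * μ A ^ (finrank ℝ E : ℝ)⁻¹ := by
  have hE : finrank ℝ E ≠ 0 := finrank_pos.ne'
  rw [Measure.addHaar_smul_of_nonneg μ hr, ENNReal.mul_rpow_of_nonneg _ _ (by positivity),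
    ENNReal.ofReal_pow hr, ENNReal.pow_rpow_inv_natCast hE]

lemma measure_ball_add_rpow_inv_finrank {r s : ℝ} (hr : 0 ≤ r) (hs : 0 ≤ s) :
    μ (ball 0 (r + s)) ^ (finrank ℝ E : ℝ)⁻¹
      = μ (ball 0 r) ^ (finrank ℝ E : ℝ)⁻¹ + μ (ball 0 s) ^ (finrank ℝ E : ℝ)⁻¹ := by
  have hball {t : ℝ} (ht : 0 ≤ t) : μ (ball 0 t) ^ (finrank ℝ E : ℝ)⁻¹
      = ENNReal.ofReal t * μ (ball 0 1) ^ (finrank ℝ E : ℝ)⁻¹ := by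
    rw [← measure_smul_rpow_inv_finrank μ ht, Measure.addHaar_ball μ _ ht,
      Measure.addHaar_smul_of_nonneg μ ht]
  rw [hball (add_nonneg hr hs), hball hr, hball hs, ENNReal.ofReal_add hr hs, add_mul]

lemma exists_rpow_inv_finrank_eq_and_measure_inv_smul_eq_one {A : Set E} (hA0 : μ A ≠ 0)
    (hA_top : μ A ≠ ⊤) :
    ∃ α : ℝ, 0 < α ∧ μ A ^ (finrank ℝ E : ℝ)⁻¹ = ENNReal.ofReal α ∧ μ (α⁻¹ • A) = 1 := by
  have hp : 0 < (finrank ℝ E : ℝ)⁻¹ := inv_pos.2 (Nat.cast_pos.2 finrank_pos)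
  set v := μ A ^ (finrank ℝ E : ℝ)⁻¹ with hv
  have hv_top : v ≠ ⊤ := ENNReal.rpow_ne_top_of_nonneg hp.le hA_top
  have hv0 : 0 < v.toReal := ENNReal.toReal_pos (by simp [hv, hA0, hA_top]) hv_top
  have hvα : v = ENNReal.ofReal v.toReal := (ENNReal.ofReal_toReal hv_top).symm
  refine ⟨v.toReal, hv0, hvα, ENNReal.rpow_left_injective hp.ne' ?_⟩
  calc μ (v.toReal⁻¹ • A) ^ (finrank ℝ E : ℝ)⁻¹ = ENNReal.ofReal v.toReal⁻¹ * v :=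
        measure_smul_rpow_inv_finrank μ (inv_nonneg.2 hv0.le) A
    _ = ENNReal.ofReal (v.toReal⁻¹ * v.toReal) := by
        rw [ENNReal.ofReal_mul (inv_nonneg.2 hv0.le), ← hvα]
    _ = 1 ^ (finrank ℝ E : ℝ)⁻¹ := by
        rw [inv_mul_cancel₀ hv0.ne', ENNReal.ofReal_one, ENNReal.one_rpow]

lemma brunn_minkowski_of_ne_zero_of_ne_top {A B : Set E} (hA : MeasurableSet A)
    (hB : MeasurableSet B) (hA0 : μ A ≠ 0) (hA_top : μ A ≠ ⊤) (hB0 : μ B ≠ 0) (hB_top : μ B ≠ ⊤) :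
    μ A ^ (finrank ℝ E : ℝ)⁻¹ + μ B ^ (finrank ℝ E : ℝ)⁻¹ ≤ μ (A + B) ^ (finrank ℝ E : ℝ)⁻¹ := by
  obtain ⟨α, hα, hAα, hA1⟩ := exists_rpow_inv_finrank_eq_and_measure_inv_smul_eq_one μ hA0 hA_top
  obtain ⟨β, hβ, hBβ, hB1⟩ := exists_rpow_inv_finrank_eq_and_measure_inv_smul_eq_one μ hB0 hB_top
  have hαβ : 0 < α + β := add_pos hα hβ
  -- `A + B`, scaled by `(α + β)⁻¹`, is a convex combination of sets of measure one.
  have hcomb : (α / (α + β)) • α⁻¹ • A + (β / (α + β)) • β⁻¹ • B = (α + β)⁻¹ • (A + B) := by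
    rw [smul_smul, smul_smul, smul_add]
    congr 2 <;> field_simp
  have hone : 1 ≤ μ ((α + β)⁻¹ • (A + B)) := by
    simpa [hA1, hB1, hcomb] using measure_rpow_mul_measure_rpow_le μ (div_pos hα hαβ)
      (div_pos hβ hαβ) (by field_simp) (hA.const_smul₀ α⁻¹) (hB.const_smul₀ β⁻¹)
  calc μ A ^ (finrank ℝ E : ℝ)⁻¹ + μ B ^ (finrank ℝ E : ℝ)⁻¹
      = ENNReal.ofReal (α + β) * 1 ^ (finrank ℝ E : ℝ)⁻¹ := by
        rw [hAα, hBβ, ENNReal.ofReal_add hα.le hβ.le, ENNReal.one_rpow, mul_one]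
    _ ≤ ENNReal.ofReal (α + β) * μ ((α + β)⁻¹ • (A + B)) ^ (finrank ℝ E : ℝ)⁻¹ := by gcongr
    _ = μ (A + B) ^ (finrank ℝ E : ℝ)⁻¹ := by
        rw [← measure_smul_rpow_inv_finrank μ hαβ.le, smul_inv_smul₀ hαβ.ne']

theorem brunn_minkowski {A B : Set E} (hA : MeasurableSet A) (hB : MeasurableSet B)
    (hAne : A.Nonempty) (hBne : B.Nonempty) :
    μ A ^ (finrank ℝ E : ℝ)⁻¹ + μ B ^ (finrank ℝ E : ℝ)⁻¹ ≤ μ (A + B) ^ (finrank ℝ E : ℝ)⁻¹ := by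
  have hp0 : 0 < (finrank ℝ E : ℝ)⁻¹ := inv_pos.2 (Nat.cast_pos.2 finrank_pos)
  have hBA : μ B ≤ μ (A + B) := measure_le_measure_add_of_nonempty μ hAne B
  have hAB : μ A ≤ μ (A + B) := add_comm B A ▸ measure_le_measure_add_of_nonempty μ hBne A
  rcases eq_or_ne (μ A) 0 with hA0 | hA0
  · simpa [hA0, hp0] using ENNReal.rpow_le_rpow hBA hp0.le
  rcases eq_or_ne (μ B) 0 with hB0 | hB0
  · simpa [hB0, hp0] using ENNReal.rpow_le_rpow hAB hp0.le
  rcases eq_or_ne (μ (A + B)) ⊤ with hAB_top | hAB_top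
  · simp [hAB_top, hp0]
  exact brunn_minkowski_of_ne_zero_of_ne_top μ hA hB hA0 (ne_top_of_le_ne_top hAB_top hAB)
    hB0 (ne_top_of_le_ne_top hAB_top hBA)

end AddHaar

lemma log_toReal_sub_log_toReal_le {a b : ℝ≥0∞} {d : ℝ} (hd : 0 ≤ d)
    (hab : ENNReal.ofReal (Real.exp (-d)) * a ≤ b)
    (hba : ENNReal.ofReal (Real.exp (-d)) * b ≤ a) :
    Real.log a.toReal - Real.log b.toReal ≤ d := by
  have hexp : ENNReal.ofReal (Real.exp (-d)) ≠ 0 := by simp [Real.exp_pos]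
  rcases eq_or_ne a 0 with rfl | ha0
  · have hb : b = 0 := by simpa [hexp, not_le, Real.exp_pos] using hba
    simpa [hb] using hd
  rcases eq_or_ne b ⊤ with rfl | hb_top
  · have ha : a = ⊤ := by simpa [ENNReal.mul_top hexp] using hba
    simpa [ha] using hd
  have hmul := ENNReal.toReal_mono hb_top hab
  rw [ENNReal.toReal_mul, ENNReal.toReal_ofReal (Real.exp_nonneg _)] at hmul
  have ha_top : a ≠ ⊤ := by
    rintro rfl
    exact hb_top (top_le_iff.1 (ENNReal.mul_top hexp ▸ hab))
  have ha_pos : 0 < a.toReal := ENNReal.toReal_pos ha0 ha_top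
  have hlog := Real.log_le_log (mul_pos (Real.exp_pos _) ha_pos) hmul
  rw [Real.log_mul (Real.exp_pos _).ne' ha_pos.ne', Real.log_exp] at hlog
  linarith

section Rearrangement

variable {n : ℕ}

lemma ballRe_eq_univ_of_dim_zero (A : Set (EuclideanSpace ℝ (Fin 0))) : ballRe A = univ := by
  ext x
  simp [ballRe, Subsingleton.elim x 0]

lemma isOpen_ballRe (A : Set (EuclideanSpace ℝ (Fin n))) : IsOpen (ballRe A) := by
  unfold ballRe
  split_ifs
  exacts [isOpen_univ, isOpen_ball]

lemma mem_ballRe_iff [NeZero n] {A : Set (EuclideanSpace ℝ (Fin n))}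
    {x : EuclideanSpace ℝ (Fin n)} :
    x ∈ ballRe A ↔ volume (ball (0 : EuclideanSpace ℝ (Fin n)) ‖x‖) < volume A := by
  have hκ : 0 < volume.real (ball (0 : EuclideanSpace ℝ (Fin n)) 1) :=
    ENNReal.toReal_pos (measure_ball_pos _ _ one_pos).ne' measure_ball_lt_top.ne
  by_cases hA : volume A = ⊤
  · simp [ballRe, hA, measure_ball_lt_top]
  · have hball : volume.real (ball (0 : EuclideanSpace ℝ (Fin n)) ‖x‖)
        = ‖x‖ ^ n * volume.real (ball (0 : EuclideanSpace ℝ (Fin n)) 1) := by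
      rw [measureReal_def, Measure.addHaar_ball _ _ (norm_nonneg x), finrank_euclideanSpace_fin,
        ENNReal.toReal_mul, ENNReal.toReal_ofReal (by positivity), measureReal_def]
    rw [← ENNReal.toReal_lt_toReal measure_ball_lt_top.ne hA, ← measureReal_def, hball,
      ← lt_div_iff₀ hκ, ← Real.rpow_natCast, ← Real.lt_rpow_inv_iff_of_pos (norm_nonneg x)
        (by positivity) (Nat.cast_pos.2 (NeZero.pos n))]
    simp [ballRe, hA, measureReal_def]

lemma ballRe_mono {A B : Set (EuclideanSpace ℝ (Fin n))} (hAB : A ⊆ B) : ballRe A ⊆ ballRe B := by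
  rcases eq_zero_or_neZero n with rfl | hn
  · simp [ballRe_eq_univ_of_dim_zero]
  · exact fun x hx => mem_ballRe_iff.2 ((mem_ballRe_iff.1 hx).trans_le (measure_mono hAB))

lemma ballRe_ball [NeZero n] (r : ℝ) :
    ballRe (ball (0 : EuclideanSpace ℝ (Fin n)) r) = ball 0 r := by
  ext x
  rw [mem_ballRe_iff, mem_ball_zero_iff]
  refine ⟨fun h => lt_of_not_ge fun hr => h.not_ge (measure_mono (ball_subset_ball hr)),
    fun hxr => ?_⟩
  have hr : 0 < r := (norm_nonneg x).trans_lt hxr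
  rw [Measure.addHaar_ball _ _ (norm_nonneg x), Measure.addHaar_ball _ _ hr.le]
  refine ENNReal.mul_lt_mul_left (measure_ball_pos _ _ one_pos).ne' measure_ball_lt_top.ne ?_
  exact (ENNReal.ofReal_lt_ofReal_iff (by positivity)).2
    (pow_lt_pow_left₀ hxr (norm_nonneg x) finrank_pos.ne')

lemma ballRe_add_ballRe_subset {A B : Set (EuclideanSpace ℝ (Fin n))} (hA : MeasurableSet A)
    (hB : MeasurableSet B) : ballRe A + ballRe B ⊆ ballRe (A + B) := by
  rcases eq_zero_or_neZero n with rfl | hn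
  · simp [ballRe_eq_univ_of_dim_zero]
  rintro _ ⟨x, hx, y, hy, rfl⟩
  rw [mem_ballRe_iff] at hx hy ⊢
  have hAne : A.Nonempty := nonempty_of_measure_ne_zero (pos_of_gt hx).ne'
  have hBne : B.Nonempty := nonempty_of_measure_ne_zero (pos_of_gt hy).ne'
  set p : ℝ := (finrank ℝ (EuclideanSpace ℝ (Fin n)) : ℝ)⁻¹
  have hp : 0 < p := inv_pos.2 (Nat.cast_pos.2 finrank_pos)
  rw [← ENNReal.rpow_lt_rpow_iff hp] at hx hy ⊢
  calc volume (ball (0 : EuclideanSpace ℝ (Fin n)) ‖x + y‖) ^ p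
      ≤ volume (ball (0 : EuclideanSpace ℝ (Fin n)) (‖x‖ + ‖y‖)) ^ p := by
        gcongr
        exact norm_add_le x y
    _ = volume (ball (0 : EuclideanSpace ℝ (Fin n)) ‖x‖) ^ p
        + volume (ball (0 : EuclideanSpace ℝ (Fin n)) ‖y‖) ^ p :=
        measure_ball_add_rpow_inv_finrank volume (norm_nonneg x) (norm_nonneg y)
    _ < volume A ^ p + volume B ^ p := ENNReal.add_lt_add hx hy
    _ ≤ volume (A + B) ^ p := brunn_minkowski volume hA hB hAne hBne

lemma ballRe_add_closedBall_subset (A : Set (EuclideanSpace ℝ (Fin n))) (r : ℝ) :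
    ballRe A + closedBall 0 r ⊆ ballRe (A + closedBall 0 r) := by
  rcases eq_zero_or_neZero n with rfl | hn
  · simp [ballRe_eq_univ_of_dim_zero]
  rcases lt_trichotomy r 0 with hr | rfl | hr
  · simp [closedBall_eq_empty.2 hr]
  · simp
  -- Passing to `closure A`, which does not change the sum with an open ball, gives measurability.
  calc ballRe A + closedBall (0 : EuclideanSpace ℝ (Fin n)) r
      ⊆ ballRe (closure A) + closure (ball 0 r) := by
        rw [closure_ball _ hr.ne']
        exact add_subset_add_right (ballRe_mono subset_closure)
    _ = ballRe (closure A) + ballRe (ball 0 r) := by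
        rw [(isOpen_ballRe _).add_closure, ballRe_ball]
    _ ⊆ ballRe (closure A + ball 0 r) :=
        ballRe_add_ballRe_subset isClosed_closure.measurableSet measurableSet_ball
    _ = ballRe (A + ball 0 r) := by rw [isOpen_ball.closure_add]
    _ ⊆ ballRe (A + closedBall 0 r) := ballRe_mono (add_subset_add_left ball_subset_closedBall)

lemma ballRe_sublevel_add_closedBall_subset {f : EuclideanSpace ℝ (Fin n) → ℝ} {r d : ℝ}
    (hf : ∀ u v, ‖u - v‖ ≤ r → |f u - f v| ≤ d) (c : ℝ) :
    ballRe {z | f z < c} + closedBall 0 r ⊆ ballRe {z | f z < c + d} := by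
  refine (ballRe_add_closedBall_subset _ r).trans (ballRe_mono ?_)
  rintro _ ⟨u, hu, w, hw, rfl⟩
  have hfu := (abs_le.1 (hf (u + w) u (by simpa using hw))).2
  have hfc : f u < c := hu
  change f (u + w) < c + d
  linarith

/-- The positive levels `t` whose rearranged superlevel set `{g > t}*` contains `y`. They form an
interval with left endpoint `0`, and `decRe g y` is its length. -/
def rearrangementLevels (g : EuclideanSpace ℝ (Fin n) → ℝ) (y : EuclideanSpace ℝ (Fin n)) :
    Set ℝ :=
  {t | 0 < t ∧ y ∈ ballRe {z | t < g z}}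

lemma decRe_eq_volume_real_rearrangementLevels (g : EuclideanSpace ℝ (Fin n) → ℝ)
    (y : EuclideanSpace ℝ (Fin n)) : decRe g y = volume.real (rearrangementLevels g y) := by
  have hlower : IsLowerSet {t | y ∈ ballRe {z | t < g z}} := fun s t hts hs =>
    ballRe_mono (fun z (hz : s < g z) => hts.trans_lt hz) hs
  have hmeas : MeasurableSet {t | y ∈ ballRe {z | t < g z}} := hlower.ordConnected.measurableSet
  calc decRe g y = ∫ t in Ioi (0 : ℝ), {t | y ∈ ballRe {z | t < g z}}.indicator 1 t := rfl
    _ = volume.real (rearrangementLevels g y) := by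
        rw [integral_indicator_one hmeas, measureReal_restrict_apply hmeas, inter_comm]
        rfl

lemma smul_rearrangementLevels_exp_neg_subset {f : EuclideanSpace ℝ (Fin n) → ℝ} {r d : ℝ}
    (hf : ∀ u v, ‖u - v‖ ≤ r → |f u - f v| ≤ d) {x y : EuclideanSpace ℝ (Fin n)}
    (hxy : ‖y - x‖ ≤ r) :
    Real.exp (-d) • rearrangementLevels (fun z => Real.exp (-f z)) x
      ⊆ rearrangementLevels (fun z => Real.exp (-f z)) y := by
  have hsuperlevel {t : ℝ} (ht : 0 < t) :
      {z | t < Real.exp (-f z)} = {z | f z < -Real.log t} := by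
    ext z
    simp only [mem_ofPred_eq, ← Real.log_lt_iff_lt_exp ht, lt_neg]
  rintro _ ⟨t, ⟨ht, hx⟩, rfl⟩
  have hs : 0 < Real.exp (-d) * t := mul_pos (Real.exp_pos _) ht
  have hlog : -Real.log (Real.exp (-d) * t) = -Real.log t + d := by
    rw [Real.log_mul (Real.exp_pos _).ne' ht.ne', Real.log_exp]
    ring
  rw [hsuperlevel ht] at hx
  refine ⟨hs, ?_⟩
  dsimp only [smul_eq_mul]
  rw [hsuperlevel hs, hlog]
  exact ballRe_sublevel_add_closedBall_subset hf _
    ⟨x, hx, y - x, by simpa using hxy, add_sub_cancel x y⟩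

lemma exp_neg_mul_volume_rearrangementLevels_le {f : EuclideanSpace ℝ (Fin n) → ℝ} {r d : ℝ}
    (hf : ∀ u v, ‖u - v‖ ≤ r → |f u - f v| ≤ d) {x y : EuclideanSpace ℝ (Fin n)}
    (hxy : ‖y - x‖ ≤ r) :
    ENNReal.ofReal (Real.exp (-d)) * volume (rearrangementLevels (fun z => Real.exp (-f z)) x)
      ≤ volume (rearrangementLevels (fun z => Real.exp (-f z)) y) := by
  simpa [Measure.addHaar_smul_of_nonneg, Real.exp_nonneg] using
    measure_mono (μ := volume) (smul_rearrangementLevels_exp_neg_subset hf hxy)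

end Rearrangement

theorem incRe_lipschitz_general {n : ℕ} {ω : ℝ → ℝ} (hω : MonotoneOn ω (Ici 0))
    {f : EuclideanSpace ℝ (Fin n) → ℝ} (hf : ∀ x y, |f x - f y| ≤ ω ‖x - y‖) :
    ∀ x y, |incRe f x - incRe f y| ≤ ω ‖x - y‖ := by
  intro x y
  have hf_near : ∀ u v, ‖u - v‖ ≤ ‖x - y‖ → |f u - f v| ≤ ω ‖x - y‖ := fun u v huv =>
    (hf u v).trans (hω (norm_nonneg _) (norm_nonneg _) huv)
  have hω_nonneg : 0 ≤ ω ‖x - y‖ := (abs_nonneg _).trans (hf x y)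
  have hxy := exp_neg_mul_volume_rearrangementLevels_le hf_near (norm_sub_rev y x).le
  have hyx := exp_neg_mul_volume_rearrangementLevels_le hf_near (le_refl ‖x - y‖)
  simp only [incRe, decRe_eq_volume_real_rearrangementLevels, measureReal_def, abs_sub_le_iff,
    neg_sub_neg]
  exact ⟨log_toReal_sub_log_toReal_le hω_nonneg hyx hxy,
    log_toReal_sub_log_toReal_le hω_nonneg hxy hyx⟩

theorem incRe_lipschitz {n : ℕ} (L : ℝ) (hL : 0 < L)
    (f : EuclideanSpace ℝ (Fin n) → ℝ)
    (hf : ∀ x y, |f x - f y| ≤ L * ‖x - y‖) :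
    ∀ x y, |incRe f x - incRe f y| ≤ L * ‖x - y‖ :=
  incRe_lipschitz_general (fun _ _ _ _ hst => mul_le_mul_of_nonneg_left hst hL.le) hf
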